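/- For every integer ℓ ≥ 4, the relative Turán density of the ordered cycle C_ℓ satisfies ρ(C_ℓ) ≥ (ℓ−2)/(2ℓ−2). -/

import Mathlib

/-!
Give every vertex a label in `Fin k`, where `k = ℓ - 1`, and keep only the edges `u < v` of `G`
along which the label strictly increases. The vertices of an ordered cycle `C_ℓ` form a monotone
path on `ℓ` vertices, along which the `k` labels would have to increase strictly `k` times, so
what is kept is `C_ℓ`-free (`oFree_labelGraph`). For a uniformly random labelling a given edge
survives with probability `(k - 1) / (2 k) = (ℓ - 2) / (2 ℓ - 2)` (`two_mul_card_lt`: the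
probability of a tie is `1 / k`, and the two strict orders are equally likely). By averaging,
some labelling keeps at least this proportion of the edges (`exists_labelGraph`).
-/

/-- The number of edges of a graph. -/
noncomputable def eCount {n : ℕ} (G : SimpleGraph (Fin n)) : ℕ := G.edgeSet.ncard

/-- An ordered graph `G` on `Fin n` contains an ordered graph `F` on `Fin m` if there is a
strictly increasing map sending edges of `F` to edges of `G`. -/
def OContains {m n : ℕ} (F : SimpleGraph (Fin m)) (G : SimpleGraph (Fin n)) : Prop :=
  ∃ g : Fin m → Fin n, StrictMono g ∧ ∀ u v, F.Adj u v → G.Adj (g u) (g v)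

/-- `G` is `F`-free if it contains no copy of `F`. -/
def OFree {m n : ℕ} (F : SimpleGraph (Fin m)) (G : SimpleGraph (Fin n)) : Prop :=
  ¬ OContains F G

/-- The relative Turán density of an ordered graph `F`: the supremum of all `ς ∈ [0,1]`
such that every ordered graph `G` has an `F`-free subgraph `G'` with `e(G') ≥ ς·e(G)`. -/
noncomputable def relTuran {m : ℕ} (F : SimpleGraph (Fin m)) : ℝ :=
  sSup {ς : ℝ | ς ∈ Set.Icc 0 1 ∧ ∀ (n : ℕ) (G : SimpleGraph (Fin n)),
    ∃ G' ≤ G, OFree F G' ∧ ς * (eCount G : ℝ) ≤ (eCount G' : ℝ)}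


/-- The ordered cycle `C_ℓ` on `Fin ℓ`: edges between consecutive vertices together with the
edge between the first and the last vertex. -/
def orderedCycle (ℓ : ℕ) : SimpleGraph (Fin ℓ) :=
  SimpleGraph.fromRel (fun i j => (i : ℕ) + 1 = (j : ℕ) ∨ ((i : ℕ) = 0 ∧ (j : ℕ) + 1 = ℓ))

open Finset in
/-- Shifting the label of `v` by each `c : Fin k` shows that ties have probability `1 / k`. -/
lemma mul_card_eq {n k : ℕ} [NeZero k] {u v : Fin n} (h : u ≠ v) :
    k * #{f : Fin n → Fin k | f u = f v} = k ^ n := by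
  have shift : ∀ c : Fin k, #{f : Fin n → Fin k | f u = f v} =
      #{f : Fin n → Fin k | f u = f v + c} := by
    intro c
    refine (Finset.card_equiv (Equiv.addRight (Pi.single v c)) ?_).symm
    intro f
    simp [h]
  have hsum : ∑ c : Fin k, #{f : Fin n → Fin k | f u = f v + c} = k ^ n := by
    simp only [Finset.card_filter]
    rw [Finset.sum_comm]
    have : ∀ f : Fin n → Fin k, ∑ c : Fin k, (if f u = f v + c then 1 else 0) = 1 := by
      intro f
      rw [Finset.sum_eq_single (f u - f v)]
      · simp
      · intro c _ hc
        rw [if_neg]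
        rintro h'
        apply hc
        simp [h']
      · simp
    simp [this]
  rw [← hsum, ← Finset.sum_congr rfl fun c _ => shift c]
  simp

open Finset in
/-- Among all labellings by `k` labels, a proportion `(k - 1) / (2 k)` increases from `u` to `v`. -/
lemma two_mul_card_lt {n k : ℕ} [NeZero k] {u v : Fin n} (h : u ≠ v) :
    2 * (k : ℝ) * #{f : Fin n → Fin k | f u < f v} = ((k : ℝ) - 1) * (k : ℝ) ^ n := by
  have swap : #{f : Fin n → Fin k | f v < f u} = #{f : Fin n → Fin k | f u < f v} := by
    refine Finset.card_equiv ((Equiv.swap u v).arrowCongr (Equiv.refl _)) ?_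
    intro f
    simp only [mem_filter, mem_univ, true_and, Equiv.arrowCongr_apply, Function.comp_apply,
      Equiv.symm_swap, Equiv.swap_apply_left, Equiv.swap_apply_right, Equiv.refl_apply]
  have total : #{f : Fin n → Fin k | f u < f v} + #{f : Fin n → Fin k | f u = f v} +
      #{f : Fin n → Fin k | f v < f u} = k ^ n := by
    have : ∑ f : Fin n → Fin k, ((if f u < f v then 1 else 0) + (if f u = f v then 1 else 0)
        + (if f v < f u then 1 else 0)) = ∑ f : Fin n → Fin k, 1 := by
      refine Finset.sum_congr rfl fun f _ => ?_
      rcases lt_trichotomy (f u) (f v) with h | h | h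
      · simp [h, h.ne, h.not_gt]
      · simp [h]
      · simp [h, h.ne', h.not_gt]
    simp only [Finset.sum_add_distrib, ← Finset.card_filter] at this
    rw [this]
    simp
  have tie := mul_card_eq (k := k) h
  rw [swap] at total
  have total' : (#{f : Fin n → Fin k | f u < f v} : ℝ) + #{f : Fin n → Fin k | f u = f v} +
      #{f : Fin n → Fin k | f u < f v} = (k : ℝ) ^ n := by exact_mod_cast total
  have tie' : (k : ℝ) * #{f : Fin n → Fin k | f u = f v} = (k : ℝ) ^ n := by exact_mod_cast tie
  linear_combination (k : ℝ) * total' - tie'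

/-- The subgraph of `G` formed by the edges along which the labelling `f` strictly increases. -/
def labelGraph {n k : ℕ} (G : SimpleGraph (Fin n)) (f : Fin n → Fin k) :
    SimpleGraph (Fin n) where
  Adj u v := G.Adj u v ∧ (u < v ∧ f u < f v ∨ v < u ∧ f v < f u)
  symm := ⟨fun _ _ h => ⟨h.1.symm, h.2.symm⟩⟩
  loopless := ⟨fun _ h => G.irrefl h.1⟩

lemma labelGraph_adj_of_lt {n k : ℕ} {G : SimpleGraph (Fin n)} {f : Fin n → Fin k} {u v : Fin n}
    (h : u < v) : (labelGraph G f).Adj u v ↔ G.Adj u v ∧ f u < f v := by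
  simp [labelGraph, h, h.not_gt]

lemma labelGraph_le {n k : ℕ} (G : SimpleGraph (Fin n)) (f : Fin n → Fin k) :
    labelGraph G f ≤ G := fun _ _ h => h.1

/-- The composite of the labelling with a copy of `C_{k+1}` would embed `Fin (k + 1)` into
`Fin k`. -/
lemma oFree_labelGraph {n k : ℕ} (G : SimpleGraph (Fin n)) (f : Fin n → Fin k) :
    OFree (orderedCycle (k + 1)) (labelGraph G f) := by
  rintro ⟨g, hg, hadj⟩
  have hmono : StrictMono (f ∘ g) := by
    rw [Fin.strictMono_iff_lt_succ]
    intro i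
    have hlt : g i.castSucc < g i.succ := hg Fin.castSucc_lt_succ
    refine ((labelGraph_adj_of_lt hlt).1 (hadj _ _ ?_)).2
    rw [orderedCycle, SimpleGraph.fromRel_adj]
    exact ⟨Fin.castSucc_lt_succ.ne, Or.inl (Or.inl (by simp))⟩
  simpa using Fintype.card_le_of_injective _ hmono.injective

open Finset Classical in
lemma eCount_eq_card {n : ℕ} (G : SimpleGraph (Fin n)) :
    eCount G = #{p : Fin n × Fin n | p.1 < p.2 ∧ G.Adj p.1 p.2} := by
  rw [eCount, ← Set.ncard_coe_finset]
  symm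
  refine Set.ncard_congr (fun p _ => s(p.1, p.2)) ?_ ?_ ?_
  · rintro ⟨a, b⟩ h
    simp_all
  · rintro ⟨a, b⟩ ⟨c, d⟩ h h' he
    simp only [coe_filter, mem_univ, true_and, Set.mem_ofPred_eq] at h h'
    rcases Sym2.eq_iff.1 he with ⟨rfl, rfl⟩ | ⟨rfl, rfl⟩
    · rfl
    · exact absurd h.1 h'.1.not_gt
  · intro e
    induction e with | _ a b => ?_
    intro h
    rw [SimpleGraph.mem_edgeSet] at h
    rcases lt_or_gt_of_ne h.ne with hab | hab
    · exact ⟨(a, b), by simp [hab, h], rfl⟩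
    · exact ⟨(b, a), by simp [hab, h.symm], Sym2.eq_swap⟩

open Finset Classical in
/-- Double counting of pairs (labelling, surviving edge). -/
lemma sum_eCount_labelGraph {n k : ℕ} [NeZero k] (G : SimpleGraph (Fin n)) :
    2 * (k : ℝ) * ∑ f : Fin n → Fin k, (eCount (labelGraph G f) : ℝ) =
      ((k : ℝ) - 1) * (k : ℝ) ^ n * eCount G := by
  have key : ∑ f : Fin n → Fin k, eCount (labelGraph G f) =
      ∑ p : Fin n × Fin n with p.1 < p.2 ∧ G.Adj p.1 p.2,
        #{f : Fin n → Fin k | f p.1 < f p.2} := by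
    have : ∀ f : Fin n → Fin k, eCount (labelGraph G f) =
        ∑ p : Fin n × Fin n with p.1 < p.2 ∧ G.Adj p.1 p.2,
          if f p.1 < f p.2 then 1 else 0 := by
      intro f
      rw [eCount_eq_card, ← Finset.card_filter, Finset.filter_filter]
      congr 1
      ext p
      simp only [mem_filter, mem_univ, true_and]
      constructor
      · rintro ⟨h1, h2⟩
        rw [labelGraph_adj_of_lt h1] at h2
        exact ⟨⟨h1, h2.1⟩, h2.2⟩
      · rintro ⟨⟨h1, h2⟩, h3⟩
        exact ⟨h1, (labelGraph_adj_of_lt h1).2 ⟨h2, h3⟩⟩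
    simp only [this, Finset.card_filter]
    rw [Finset.sum_comm]
  rw [← Nat.cast_sum, key, Nat.cast_sum, Finset.mul_sum, eCount_eq_card]
  rw [Finset.sum_congr rfl (g := fun _ => ((k : ℝ) - 1) * (k : ℝ) ^ n)]
  · simp [mul_comm]
  · intro p hp
    have := (Finset.mem_filter.1 hp).2.1
    convert two_mul_card_lt (k := k) this.ne

lemma exists_labelGraph {n k : ℕ} [NeZero k] (G : SimpleGraph (Fin n)) :
    ∃ f : Fin n → Fin k, ((k : ℝ) - 1) / (2 * k) * eCount G ≤ eCount (labelGraph G f) := by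
  have hk : (0 : ℝ) < k := by exact_mod_cast NeZero.pos k
  obtain ⟨f, -, hf⟩ := Finset.exists_le_of_sum_le (s := (Finset.univ : Finset (Fin n → Fin k)))
    (f := fun _ => ((k : ℝ) - 1) / (2 * k) * eCount G)
    (g := fun f => (eCount (labelGraph G f) : ℝ)) Finset.univ_nonempty (by
      refine le_of_mul_le_mul_left ?_ (show (0 : ℝ) < 2 * k by positivity)
      rw [sum_eCount_labelGraph]
      simp only [Finset.sum_const, Finset.card_univ, Fintype.card_pi, Fintype.card_fin,
        Finset.prod_const, nsmul_eq_mul, Nat.cast_pow]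
      apply le_of_eq
      field_simp)
  exact ⟨f, hf⟩

theorem relTuran_orderedCycle_lower (ℓ : ℕ) (hℓ : 4 ≤ ℓ) :
    ((ℓ : ℝ) - 2) / (2 * ℓ - 2) ≤ relTuran (orderedCycle ℓ) := by
  obtain ⟨k, rfl⟩ : ∃ k, ℓ = k + 1 := ⟨ℓ - 1, by omega⟩
  have hk : (3 : ℝ) ≤ k := by exact_mod_cast (by omega : 3 ≤ k)
  have : NeZero k := ⟨by omega⟩
  have heq : (((k + 1 : ℕ) : ℝ) - 2) / (2 * (k + 1 : ℕ) - 2) = ((k : ℝ) - 1) / (2 * k) := by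
    push_cast
    congr 1 <;> ring
  rw [heq]
  refine le_csSup ⟨1, fun _ h => h.1.2⟩ ⟨⟨?_, ?_⟩, fun n G => ?_⟩
  · exact div_nonneg (by linarith) (by linarith)
  · rw [div_le_one (by linarith)]
    linarith
  · obtain ⟨f, hf⟩ := exists_labelGraph (k := k) G
    exact ⟨labelGraph G f, labelGraph_le G f, oFree_labelGraph G f, hf⟩
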